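/- Let a > 0 and let θ : ℝ² × ℝ → ℝ be infinitely differentiable with compact support. Set ψ(y,t) = ∂²θ/∂t²(y,t) − a² Δθ(y,t), where Δ is the Laplacian in the spatial variable y ∈ ℝ². Then for every x ∈ ℝ² and every τ ∈ ℝ, (1/(2πa)) ∫_τ^∞ ∬_{\{y : |y−x| < a(t−τ)\}} ψ(y,t) / √( a²(t−τ)² − |x−y|² ) dy dt = θ(x,τ). (Poisson's formula identity for the planar wave equation applied to test functions; this is the key identity showing that the Poisson-formula candidate is a generalized solution.) -/

import Mathlib

open MeasureTheory Real

/-- The spatial Laplacian of a function `f : ℝ² → ℝ` at `y`, as the sum of the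
second directional derivatives along the standard basis vectors. -/
noncomputable def spatialLaplacian (f : EuclideanSpace ℝ (Fin 2) → ℝ)
    (y : EuclideanSpace ℝ (Fin 2)) : ℝ :=
  ∑ i : Fin 2, iteratedDeriv 2 (fun u : ℝ => f (y + u • EuclideanSpace.single i (1 : ℝ))) 0

open scoped ContDiff

section Cone

variable {Q : Type*} [NormedAddCommGroup Q] [NormedSpace ℝ Q]

/-- The point of the cone with apex `p` and axis `U` lying at height `s` over the apex, in the
direction with polar angle `φ` and azimuth `α` with respect to the frame `(V, W)`. -/
noncomputable def conePoint (p U V W : Q) (a s φ α : ℝ) : Q :=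
  p + (a * s * sin φ) • (cos α • V + sin α • W) + s • U

variable (p U V W : Q) (a : ℝ)

lemma continuous_conePoint :
    Continuous fun z : ℝ × ℝ × ℝ => conePoint p U V W a z.1 z.2.1 z.2.2 := by
  unfold conePoint
  fun_prop

lemma hasDerivAt_conePoint_height (s φ α : ℝ) :
    HasDerivAt (fun s => conePoint p U V W a s φ α)
      ((a * sin φ) • (cos α • V + sin α • W) + U) s := by
  unfold conePoint
  have h1 : HasDerivAt (fun s : ℝ => a * s * sin φ) (a * sin φ) s := by
    simpa using ((hasDerivAt_id s).const_mul a).mul_const (sin φ)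
  have h2 : HasDerivAt (fun s : ℝ => s • U) U s := by
    simpa using (hasDerivAt_id s).smul_const U
  exact ((h1.smul_const _).const_add p).add h2

lemma hasDerivAt_conePoint_polar (s φ α : ℝ) :
    HasDerivAt (fun φ => conePoint p U V W a s φ α)
      ((a * s * cos φ) • (cos α • V + sin α • W)) φ := by
  unfold conePoint
  exact ((((hasDerivAt_sin φ).const_mul (a * s)).smul_const _).const_add p).add_const _

lemma hasDerivAt_frame (α : ℝ) :
    HasDerivAt (fun α => cos α • V + sin α • W) (-sin α • V + cos α • W) α :=
  ((hasDerivAt_cos α).smul_const V).add ((hasDerivAt_sin α).smul_const W)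

lemma hasDerivAt_conePoint_azimuth (s φ α : ℝ) :
    HasDerivAt (fun α => conePoint p U V W a s φ α)
      ((a * s * sin φ) • (-sin α • V + cos α • W)) α := by
  unfold conePoint
  exact (((hasDerivAt_frame V W α).const_smul (a * s * sin φ)).const_add p).add_const _

variable {f : Q → ℝ}

lemma ContDiff.hasDerivAt_comp_curve (hf : ContDiff ℝ ∞ f) {γ : ℝ → Q} {γ' : Q} {t : ℝ}
    (hγ : HasDerivAt γ γ' t) : HasDerivAt (fun t => f (γ t)) (fderiv ℝ f (γ t) γ') t :=
  ((hf.differentiable (by simp)) (γ t)).hasFDerivAt.comp_hasDerivAt t hγ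

lemma ContDiff.hasDerivAt_fderiv_apply_curve (hf : ContDiff ℝ ∞ f) {γ v : ℝ → Q} {γ' v' : Q}
    {t : ℝ} (hγ : HasDerivAt γ γ' t) (hv : HasDerivAt v v' t) :
    HasDerivAt (fun t => fderiv ℝ f (γ t) (v t))
      (fderiv ℝ (fderiv ℝ f) (γ t) γ' (v t) + fderiv ℝ f (γ t) v') t := by
  have hf' : ContDiff ℝ ∞ (fderiv ℝ f) := hf.fderiv_right (by simp)
  have h := ((hf'.differentiable (by simp)) (γ t)).hasFDerivAt.comp_hasDerivAt t hγ
  exact h.clm_apply hv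

lemma ContDiff.fderiv_fderiv_comm (hf : ContDiff ℝ ∞ f) (q v w : Q) :
    fderiv ℝ (fderiv ℝ f) q v w = fderiv ℝ (fderiv ℝ f) q w v :=
  (hf.contDiffAt.isSymmSndFDerivAt
    (by simpa using ENat.LEInfty.out)) v w

lemma ContDiff.iteratedDeriv_two_line (hf : ContDiff ℝ ∞ f) (q v : Q) (u : ℝ) :
    iteratedDeriv 2 (fun u : ℝ => f (q + u • v)) u = fderiv ℝ (fderiv ℝ f) (q + u • v) v v := by
  have hγ (u : ℝ) : HasDerivAt (fun u : ℝ => q + u • v) v u := by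
    simpa using ((hasDerivAt_id u).smul_const v).const_add q
  have h1 : deriv (fun u : ℝ => f (q + u • v)) = fun u => fderiv ℝ f (q + u • v) v :=
    funext fun u => (hf.hasDerivAt_comp_curve (hγ u)).deriv
  rw [iteratedDeriv_succ, iteratedDeriv_one, h1]
  simpa using (hf.hasDerivAt_fderiv_apply_curve (hγ u) (hasDerivAt_const u v)).deriv

lemma Continuous.intervalIntegral_swap {F : ℝ → ℝ → ℝ}
    (hF : Continuous fun z : ℝ × ℝ => F z.1 z.2) (a b c d : ℝ) :
    ∫ x in a..b, ∫ y in c..d, F x y = ∫ y in c..d, ∫ x in a..b, F x y := by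
  refine intervalIntegral_intervalIntegral_swap ?_
  have hK : IsCompact (Set.uIcc a b ×ˢ Set.uIcc c d) := isCompact_uIcc.prod isCompact_uIcc
  exact (hF.continuousOn.integrableOn_compact hK).mono_set
    (Set.prod_mono Set.uIoc_subset_uIcc Set.uIoc_subset_uIcc)

/-- The weighted wave operator along `conePoint` is a sum of a height, a polar and an azimuthal
derivative, all three of them continuous. -/
lemma wave_operator_conePoint_eq_sum_deriv (hf : ContDiff ℝ ∞ f) :
    ∃ A B C : ℝ → ℝ → ℝ → ℝ,
      (Continuous fun z : ℝ × ℝ × ℝ => A z.1 z.2.1 z.2.2) ∧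
      (Continuous fun z : ℝ × ℝ × ℝ => B z.1 z.2.1 z.2.2) ∧
      (Continuous fun z : ℝ × ℝ × ℝ => C z.1 z.2.1 z.2.2) ∧
      (∀ s φ α, HasDerivAt (fun s => s * sin φ * fderiv ℝ f (conePoint p U V W a s φ α) U
        - sin φ * f (conePoint p U V W a s φ α)
        - a * s * sin φ ^ 2 *
          fderiv ℝ f (conePoint p U V W a s φ α) (cos α • V + sin α • W)) (A s φ α) s) ∧
      (∀ s φ α, HasDerivAt (fun φ => a * (sin φ * cos φ) *
          fderiv ℝ f (conePoint p U V W a s φ α) (cos α • V + sin α • W)) (B s φ α) φ) ∧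
      (∀ s φ α, HasDerivAt (fun α => a *
          fderiv ℝ f (conePoint p U V W a s φ α) (-sin α • V + cos α • W)) (C s φ α) α) ∧
      ∀ s φ α, s * sin φ * (fderiv ℝ (fderiv ℝ f) (conePoint p U V W a s φ α) U U
        - a ^ 2 * (fderiv ℝ (fderiv ℝ f) (conePoint p U V W a s φ α) V V
          + fderiv ℝ (fderiv ℝ f) (conePoint p U V W a s φ α) W W)) =
        A s φ α - B s φ α - C s φ α := by
  have hf0 : Continuous f := hf.continuous
  have hf1' : ContDiff ℝ ∞ (fderiv ℝ f) := hf.fderiv_right (by simp)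
  have hf1 : Continuous (fderiv ℝ f) := hf1'.continuous
  have hf2 : Continuous (fderiv ℝ (fderiv ℝ f)) := hf1'.continuous_fderiv (by simp)
  have hγ := continuous_conePoint p U V W a
  refine ⟨fun s φ α => s * sin φ * fderiv ℝ (fderiv ℝ f) (conePoint p U V W a s φ α)
        ((a * sin φ) • (cos α • V + sin α • W) + U) U
      - 2 * a * sin φ ^ 2 * fderiv ℝ f (conePoint p U V W a s φ α) (cos α • V + sin α • W)
      - a * s * sin φ ^ 2 * fderiv ℝ (fderiv ℝ f) (conePoint p U V W a s φ α)
        ((a * sin φ) • (cos α • V + sin α • W) + U) (cos α • V + sin α • W),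
    fun s φ α => a * (cos φ ^ 2 - sin φ ^ 2) *
        fderiv ℝ f (conePoint p U V W a s φ α) (cos α • V + sin α • W)
      + a * (sin φ * cos φ) * fderiv ℝ (fderiv ℝ f) (conePoint p U V W a s φ α)
        ((a * s * cos φ) • (cos α • V + sin α • W)) (cos α • V + sin α • W),
    fun s φ α => a * (fderiv ℝ (fderiv ℝ f) (conePoint p U V W a s φ α)
        ((a * s * sin φ) • (-sin α • V + cos α • W)) (-sin α • V + cos α • W)
      - fderiv ℝ f (conePoint p U V W a s φ α) (cos α • V + sin α • W)),
    by fun_prop, by fun_prop, by fun_prop, fun s φ α => ?_, fun s φ α => ?_, fun s φ α => ?_,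
    fun s φ α => ?_⟩
  · have hs := hasDerivAt_conePoint_height p U V W a s φ α
    refine (((((hasDerivAt_id' s).mul_const (sin φ)).mul
        (hf.hasDerivAt_fderiv_apply_curve hs (hasDerivAt_const s U))).sub
      ((hf.hasDerivAt_comp_curve hs).const_mul (sin φ))).sub
      ((((hasDerivAt_id' s).const_mul a).mul_const (sin φ ^ 2)).mul
        (hf.hasDerivAt_fderiv_apply_curve hs
          (hasDerivAt_const s (cos α • V + sin α • W))))).congr_deriv ?_
    simp only [map_add (fderiv ℝ f _), map_smul (fderiv ℝ f _), smul_eq_mul, map_zero]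
    ring
  · have hφ := hasDerivAt_conePoint_polar p U V W a s φ α
    refine ((((hasDerivAt_sin φ).mul (hasDerivAt_cos φ)).const_mul a).mul
      (hf.hasDerivAt_fderiv_apply_curve hφ
        (hasDerivAt_const φ (cos α • V + sin α • W)))).congr_deriv ?_
    simp only [map_zero, Pi.mul_apply]
    ring
  · have hα := hasDerivAt_conePoint_azimuth p U V W a s φ α
    have hv' : HasDerivAt (fun α => -sin α • V + cos α • W) (-(cos α • V + sin α • W)) α :=
      (((hasDerivAt_sin α).neg.smul_const V).add
        ((hasDerivAt_cos α).smul_const W)).congr_deriv (by module)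
    refine ((hf.hasDerivAt_fderiv_apply_curve hα hv').const_mul a).congr_deriv ?_
    simp only [map_neg, sub_eq_add_neg]
  · have h1 := hf.fderiv_fderiv_comm (conePoint p U V W a s φ α) V U
    have h2 := hf.fderiv_fderiv_comm (conePoint p U V W a s φ α) W U
    have h3 := hf.fderiv_fderiv_comm (conePoint p U V W a s φ α) W V
    simp only [map_add, map_smul, add_apply, smul_apply,
      smul_eq_mul, h1, h2, h3]
    have hy := cos_sq' φ
    have hv := cos_sq' α
    generalize fderiv ℝ (fderiv ℝ f) (conePoint p U V W a s φ α) = D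
    generalize fderiv ℝ f (conePoint p U V W a s φ α) = E
    ring_nf
    rw [hy, hv]
    ring

/-- The iterated integral of the weighted wave operator over a cone outside of which `f` vanishes
is a multiple of the value of `f` at the apex. -/
lemma integral_wave_operator_conePoint (hf : ContDiff ℝ ∞ f) (S : ℝ)
    (hS : ∀ φ α, f (conePoint p U V W a S φ α) = 0)
    (hS' : ∀ φ α, fderiv ℝ f (conePoint p U V W a S φ α) = 0) :
    ∫ s in (0 : ℝ)..S, ∫ φ in (0 : ℝ)..(π / 2), ∫ α in (-π)..π,
      s * sin φ * (fderiv ℝ (fderiv ℝ f) (conePoint p U V W a s φ α) U U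
        - a ^ 2 * (fderiv ℝ (fderiv ℝ f) (conePoint p U V W a s φ α) V V
          + fderiv ℝ (fderiv ℝ f) (conePoint p U V W a s φ α) W W)) = 2 * π * f p := by
  obtain ⟨A, B, C, cA, cB, cC, hA, hB, hC, hABC⟩ :=
    wave_operator_conePoint_eq_sum_deriv p U V W a hf
  have curry {F : ℝ → ℝ → ℝ → ℝ} (hF : Continuous fun z : ℝ × ℝ × ℝ => F z.1 z.2.1 z.2.2)
      {X : Type} [TopologicalSpace X] {x y z : X → ℝ} (hx : Continuous x) (hy : Continuous y)
      (hz : Continuous z) : Continuous fun t => F (x t) (y t) (z t) :=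
    hF.comp (hx.prodMk (hy.prodMk hz))
  have intC (s φ : ℝ) : ∫ α in (-π)..π, C s φ α = 0 := by
    rw [intervalIntegral.integral_eq_sub_of_hasDerivAt (fun α _ => hC s φ α)
      ((curry cC (by fun_prop) (by fun_prop) (by fun_prop)).intervalIntegrable _ _)]
    simp [conePoint]
  have intB (s : ℝ) : ∫ φ in (0 : ℝ)..(π / 2), ∫ α in (-π)..π, B s φ α = 0 := by
    rw [Continuous.intervalIntegral_swap (curry cB (by fun_prop) (by fun_prop) (by fun_prop))]
    have (α : ℝ) : ∫ φ in (0 : ℝ)..(π / 2), B s φ α = 0 := by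
      rw [intervalIntegral.integral_eq_sub_of_hasDerivAt (fun φ _ => hB s φ α)
        ((curry cB (by fun_prop) (by fun_prop) (by fun_prop)).intervalIntegrable _ _)]
      simp
    simp [this]
  have intA (φ α : ℝ) : ∫ s in (0 : ℝ)..S, A s φ α = sin φ * f p := by
    rw [intervalIntegral.integral_eq_sub_of_hasDerivAt (fun s _ => hA s φ α)
      ((curry cA (by fun_prop) (by fun_prop) (by fun_prop)).intervalIntegrable _ _), hS, hS']
    simp [conePoint]
  simp only [hABC]
  have h1 (s φ : ℝ) : ∫ α in (-π)..π, (A s φ α - B s φ α - C s φ α) =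
      (∫ α in (-π)..π, A s φ α) - ∫ α in (-π)..π, B s φ α := by
    have iA := (curry cA (continuous_const (y := s)) (continuous_const (y := φ))
      continuous_id).intervalIntegrable (μ := volume) (-π) π
    have iB := (curry cB (continuous_const (y := s)) (continuous_const (y := φ))
      continuous_id).intervalIntegrable (μ := volume) (-π) π
    have iC := (curry cC (continuous_const (y := s)) (continuous_const (y := φ))
      continuous_id).intervalIntegrable (μ := volume) (-π) π
    have := intervalIntegral.integral_sub (iA.sub iB) iC
    have h' := intervalIntegral.integral_sub iA iB
    simp only [id] at this h'
    rw [this, h', intC, sub_zero]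
  have par {F : ℝ → ℝ → ℝ → ℝ} (hF : Continuous fun z : ℝ × ℝ × ℝ => F z.1 z.2.1 z.2.2) :
      Continuous fun z : ℝ × ℝ => ∫ α in (-π)..π, F z.1 z.2 α :=
    intervalIntegral.continuous_parametric_intervalIntegral_of_continuous'
      (f := fun (z : ℝ × ℝ) α => F z.1 z.2 α)
      (curry hF (x := fun t : (ℝ × ℝ) × ℝ => t.1.1) (y := fun t => t.1.2) (z := fun t => t.2)
        (by fun_prop) (by fun_prop) (by fun_prop)) _ _
  have h2 (s : ℝ) : ∫ φ in (0 : ℝ)..(π / 2), ((∫ α in (-π)..π, A s φ α) - ∫ α in (-π)..π, B s φ α)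
      = ∫ φ in (0 : ℝ)..(π / 2), ∫ α in (-π)..π, A s φ α := by
    rw [intervalIntegral.integral_sub, intB, sub_zero]
    · exact ((par cA).comp (Continuous.prodMk_right s)).intervalIntegrable _ _
    · exact ((par cB).comp (Continuous.prodMk_right s)).intervalIntegrable _ _
  simp only [h1, h2]
  rw [Continuous.intervalIntegral_swap (par cA)]
  have h3 (φ : ℝ) : ∫ s in (0 : ℝ)..S, ∫ α in (-π)..π, A s φ α = sin φ * (2 * π * f p) := by
    rw [Continuous.intervalIntegral_swap (F := fun s α => A s φ α)
      (curry cA (by fun_prop) (by fun_prop) (by fun_prop))]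
    simp only [intA, intervalIntegral.integral_const, smul_eq_mul]
    ring
  simp [h3]

end Cone

section Disc

/-- The plane vector with given Cartesian coordinates. -/
noncomputable def planeVector (u v : ℝ) : EuclideanSpace ℝ (Fin 2) :=
  u • EuclideanSpace.single 0 1 + v • EuclideanSpace.single 1 1

lemma norm_planeVector (u v : ℝ) : ‖planeVector u v‖ = √(u ^ 2 + v ^ 2) := by
  simp [planeVector, EuclideanSpace.norm_eq, Fin.sum_univ_two]

lemma integral_eq_integral_planeVector (h : EuclideanSpace ℝ (Fin 2) → ℝ)
    (x : EuclideanSpace ℝ (Fin 2)) :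
    ∫ y, h y = ∫ q : ℝ × ℝ, h (x + planeVector q.1 q.2) := by
  rw [← integral_add_left_eq_self h x,
    ← (EuclideanSpace.volume_preserving_symm_measurableEquiv_toLp (Fin 2)).symm.integral_comp',
    ← (volume_preserving_finTwoArrow ℝ).symm.integral_comp']
  congr! 3 with q
  ext i
  fin_cases i <;> simp [planeVector]

lemma integral_Ioo_prod_comp_mul_sin (k : ℝ × ℝ → ℝ) {R : ℝ} (hR : 0 < R) (s : Set ℝ)
    (hs : MeasurableSet s) :
    ∫ q in Set.Ioo 0 R ×ˢ s, k q =
      ∫ q in Set.Ioo 0 (π / 2) ×ˢ s, R * cos q.1 * k (R * sin q.1, q.2) := by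
  have himg : (fun q : ℝ × ℝ => (R * sin q.1, q.2)) '' (Set.Ioo 0 (π / 2) ×ˢ s) =
      Set.Ioo 0 R ×ˢ s := by
    ext ⟨r, α⟩
    simp only [Set.mem_image, Set.mem_prod, Set.mem_Ioo, Prod.exists, Prod.mk.injEq]
    constructor
    · rintro ⟨φ, α, ⟨⟨h0, h1⟩, hα⟩, rfl, rfl⟩
      have hlt := sin_lt_sin_of_lt_of_le_pi_div_two (by linarith) le_rfl h1
      rw [sin_pi_div_two] at hlt
      exact ⟨⟨mul_pos hR (sin_pos_of_pos_of_lt_pi h0 (by linarith [pi_pos])), by nlinarith⟩, hα⟩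
    · rintro ⟨⟨h0, h1⟩, hα⟩
      have hr : r / R < 1 := (div_lt_one hR).2 h1
      have hr0 : 0 < r / R := div_pos h0 hR
      refine ⟨arcsin (r / R), α, ⟨⟨arcsin_pos.2 hr0, arcsin_lt_pi_div_two.2 hr⟩, hα⟩, ?_, rfl⟩
      rw [sin_arcsin (by linarith) hr.le]
      field_simp
  have hinj : Set.InjOn (fun q : ℝ × ℝ => (R * sin q.1, q.2)) (Set.Ioo 0 (π / 2) ×ˢ s) := by
    rintro ⟨φ, α⟩ ⟨⟨h0, h1⟩, -⟩ ⟨φ', α'⟩ ⟨⟨h0', h1'⟩, -⟩ h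
    simp only [Prod.mk.injEq, mul_eq_mul_left_iff, hR.ne', or_false] at h h0 h1 h0' h1' ⊢
    exact ⟨injOn_sin ⟨by linarith, h1.le⟩ ⟨by linarith, h1'.le⟩ h.1, h.2⟩
  have hder (q : ℝ × ℝ) : HasFDerivAt (fun q : ℝ × ℝ => (R * sin q.1, q.2))
      (Matrix.toLin (.finTwoProd ℝ) (.finTwoProd ℝ)
        !![R * cos q.1, 0; 0, 1]).toContinuousLinearMap q := by
    rw [Matrix.toLin_finTwoProd_toContinuousLinearMap]
    convert! HasFDerivAt.prodMk (𝕜 := ℝ)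
      (((hasDerivAt_sin q.1).const_mul R).comp_hasFDerivAt q hasFDerivAt_fst)
      hasFDerivAt_snd using 2 <;> simp
  rw [← himg, integral_image_eq_integral_abs_det_fderiv_smul volume
    (measurableSet_Ioo.prod hs) (fun q _ => (hder q).hasFDerivWithinAt) hinj]
  refine setIntegral_congr_fun (measurableSet_Ioo.prod hs) ?_
  rintro ⟨φ, α⟩ ⟨⟨h0, h1⟩, -⟩
  have hc : 0 < cos φ := cos_pos_of_mem_Ioo ⟨by linarith, h1⟩
  simp only [LinearMap.det_toContinuousLinearMap, LinearMap.det_toLin, Matrix.det_fin_two_of,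
    smul_eq_mul, mul_one, mul_zero, sub_zero, abs_of_pos (mul_pos hR hc)]

lemma setIntegral_ball_eq_polar (h : EuclideanSpace ℝ (Fin 2) → ℝ)
    (x : EuclideanSpace ℝ (Fin 2)) (R : ℝ) :
    ∫ y in Metric.ball x R, h y = ∫ q in Set.Ioo 0 R ×ˢ Set.Ioo (-π) π,
      q.1 * h (x + planeVector (q.1 * cos q.2) (q.1 * sin q.2)) := by
  rw [← integral_indicator Metric.isOpen_ball.measurableSet, integral_eq_integral_planeVector _ x,
    ← integral_comp_polarCoord_symm, ← Set.Ioi_inter_Iio, ← Set.inter_univ (Set.Ioo (-π) π),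
    ← Set.prod_inter_prod, ← setIntegral_indicator (measurableSet_Iio.prod .univ)]
  refine setIntegral_congr_fun polarCoord.open_target.measurableSet ?_
  rintro ⟨r, α⟩ ⟨hr, -⟩
  have hd : dist (x + planeVector (r * cos α) (r * sin α)) x = r := by
    rw [dist_eq_norm, add_sub_cancel_left, norm_planeVector]
    refine (congrArg sqrt ?_).trans (sqrt_sq (Set.mem_Ioi.1 hr).le)
    linear_combination r ^ 2 * sin_sq_add_cos_sq α
  simp only [polarCoord_symm_apply, Set.indicator, Metric.mem_ball, hd, Set.mem_prod, Set.mem_Iio,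
    Set.mem_univ, and_true, smul_eq_mul, mul_ite, mul_zero]

lemma setIntegral_ball_div_sqrt {g : EuclideanSpace ℝ (Fin 2) → ℝ} (hg : Continuous g)
    (x : EuclideanSpace ℝ (Fin 2)) {R : ℝ} (hR : 0 < R) :
    ∫ y in Metric.ball x R, g y / √(R ^ 2 - dist x y ^ 2) =
      ∫ φ in (0 : ℝ)..(π / 2), ∫ α in (-π)..π,
        R * sin φ * g (x + (R * sin φ) • planeVector (cos α) (sin α)) := by
  have hsmul (r u v : ℝ) : planeVector (r * u) (r * v) = r • planeVector u v := by
    simp only [planeVector]; module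
  have hnorm (α : ℝ) : ‖planeVector (cos α) (sin α)‖ = 1 := by
    rw [norm_planeVector, cos_sq_add_sin_sq, sqrt_one]
  have hcont : Continuous fun q : ℝ × ℝ =>
      R * sin q.1 * g (x + (R * sin q.1) • planeVector (cos q.2) (sin q.2)) := by
    unfold planeVector
    fun_prop
  have hint : IntegrableOn (fun q : ℝ × ℝ =>
      R * sin q.1 * g (x + (R * sin q.1) • planeVector (cos q.2) (sin q.2)))
      (Set.Ioc 0 (π / 2) ×ˢ Set.Ioc (-π) π) :=
    (hcont.continuousOn.integrableOn_compact (isCompact_Icc.prod isCompact_Icc)).mono_set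
      (Set.prod_mono Set.Ioc_subset_Icc_self Set.Ioc_subset_Icc_self)
  simp only [intervalIntegral.integral_of_le (show (0 : ℝ) ≤ π / 2 by positivity),
    intervalIntegral.integral_of_le (show -π ≤ π by linarith [pi_pos])]
  rw [setIntegral_ball_eq_polar, integral_Ioo_prod_comp_mul_sin _ hR _ measurableSet_Ioo,
    ← setIntegral_prod _ hint, ← Measure.volume_eq_prod]
  have hae : (Set.Ioc 0 (π / 2) ×ˢ Set.Ioc (-π) π : Set (ℝ × ℝ)) =ᵐ[volume]
      Set.Ioo 0 (π / 2) ×ˢ Set.Ioo (-π) π :=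
    Measure.set_prod_ae_eq Ioo_ae_eq_Ioc.symm Ioo_ae_eq_Ioc.symm
  rw [setIntegral_congr_set hae]
  refine setIntegral_congr_fun (measurableSet_Ioo.prod measurableSet_Ioo) ?_
  rintro ⟨φ, α⟩ ⟨⟨h0, h1⟩, -⟩
  have hc : 0 < cos φ := cos_pos_of_mem_Ioo ⟨by linarith, h1⟩
  have hsq : √(R ^ 2 - ‖(R * sin φ) • planeVector (cos α) (sin α)‖ ^ 2) = R * cos φ := by
    rw [norm_smul, hnorm, mul_one, norm_eq_abs, sq_abs, ← sqrt_sq (mul_pos hR hc).le]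
    congr 1
    linear_combination (-R ^ 2) * sin_sq_add_cos_sq φ
  simp only [hsmul, dist_self_add_right, hsq]
  field_simp

end Disc

/-- Poisson's formula identity for the planar wave equation applied to test functions:
for smooth compactly supported `θ` and `ψ = ∂²θ/∂t² - a² Δθ`,
`(1/(2πa)) ∫_τ^∞ ∬_{|y-x| < a(t-τ)} ψ(y,t)/√(a²(t-τ)² - |x-y|²) dy dt = θ(x,τ)`. -/
theorem poisson_formula_test_function
    (a : ℝ) (ha : 0 < a) (θ : EuclideanSpace ℝ (Fin 2) → ℝ → ℝ)
    (hθ_smooth : ContDiff ℝ (⊤ : ℕ∞) (Function.uncurry θ))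
    (hθ_supp : HasCompactSupport (Function.uncurry θ))
    (ψ : EuclideanSpace ℝ (Fin 2) → ℝ → ℝ)
    (hψ : ∀ (y : EuclideanSpace ℝ (Fin 2)) (t : ℝ),
      ψ y t = iteratedDeriv 2 (θ y) t - a ^ 2 * spatialLaplacian (fun z => θ z t) y)
    (x : EuclideanSpace ℝ (Fin 2)) (τ : ℝ) :
    (1 / (2 * Real.pi * a)) *
      ∫ t in Set.Ioi τ,
        ∫ y in Metric.ball x (a * (t - τ)),
          ψ y t / Real.sqrt (a ^ 2 * (t - τ) ^ 2 - (dist x y) ^ 2)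
      = θ x τ := by
  set f : EuclideanSpace ℝ (Fin 2) × ℝ → ℝ := Function.uncurry θ with hfdef
  set U : EuclideanSpace ℝ (Fin 2) × ℝ := (0, 1) with hU
  set V : EuclideanSpace ℝ (Fin 2) × ℝ := (EuclideanSpace.single 0 1, 0) with hV
  set W : EuclideanSpace ℝ (Fin 2) × ℝ := (EuclideanSpace.single 1 1, 0) with hW
  have hf : ContDiff ℝ ∞ f := hθ_smooth
  have hf2 : Continuous (fderiv ℝ (fderiv ℝ f)) :=
    (hf.fderiv_right (m := ∞) (by simp)).continuous_fderiv (by simp)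
  have hψf (y : EuclideanSpace ℝ (Fin 2)) (t : ℝ) : ψ y t =
      fderiv ℝ (fderiv ℝ f) (y, t) U U - a ^ 2 * (fderiv ℝ (fderiv ℝ f) (y, t) V V
        + fderiv ℝ (fderiv ℝ f) (y, t) W W) := by
    have hT := hf.iteratedDeriv_two_line (y, 0) U t
    have hX := hf.iteratedDeriv_two_line (y, t) V 0
    have hY := hf.iteratedDeriv_two_line (y, t) W 0
    simp only [hU, hV, hW, hfdef, Function.uncurry, Prod.smul_mk, Prod.mk_add_mk, smul_zero,
      smul_eq_mul, mul_one, mul_zero, add_zero, zero_add,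
      zero_smul] at hT hX hY
    rw [hψ, spatialLaplacian, Fin.sum_univ_two, hX, hY, hT]
  obtain ⟨M, hM⟩ := (hθ_supp.isCompact.image continuous_snd).bddAbove
  have hout (y : EuclideanSpace ℝ (Fin 2)) {t : ℝ} (ht : M < t) : (y, t) ∉ tsupport f :=
    fun h => (hM ⟨_, h, rfl⟩).not_gt ht
  have hf0 (y : EuclideanSpace ℝ (Fin 2)) {t : ℝ} (ht : M < t) : f (y, t) = 0 :=
    image_eq_zero_of_notMem_tsupport (hout y ht)
  have hf1 (y : EuclideanSpace ℝ (Fin 2)) {t : ℝ} (ht : M < t) : fderiv ℝ f (y, t) = 0 :=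
    image_eq_zero_of_notMem_tsupport fun h => hout y ht (tsupport_fderiv_subset ℝ h)
  have hψ0 (y : EuclideanSpace ℝ (Fin 2)) {t : ℝ} (ht : M < t) : ψ y t = 0 := by
    have : fderiv ℝ (fderiv ℝ f) (y, t) = 0 := image_eq_zero_of_notMem_tsupport fun h =>
      hout y ht (tsupport_fderiv_subset ℝ (tsupport_fderiv_subset ℝ h))
    simp [hψf, this]
  have hcone (s φ α : ℝ) : conePoint (x, τ) U V W a s φ α =
      (x + (a * s * sin φ) • planeVector (cos α) (sin α), τ + s) := by
    simp [conePoint, planeVector, hU, hV, hW]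
  obtain ⟨S, hS0, hS⟩ : ∃ S : ℝ, 0 ≤ S ∧ M < τ + S :=
    ⟨max 0 (M - τ + 1), le_max_left _ _, by linarith [le_max_right 0 (M - τ + 1)]⟩
  have key := integral_wave_operator_conePoint (x, τ) U V W a hf S
    (fun φ α => by rw [hcone, hf0 _ hS]) (fun φ α => by rw [hcone, hf1 _ hS])
  have htrunc : ∫ t in Set.Ioi τ, ∫ y in Metric.ball x (a * (t - τ)),
        ψ y t / √(a ^ 2 * (t - τ) ^ 2 - dist x y ^ 2) =
      ∫ t in Set.Ioc τ (τ + S), ∫ y in Metric.ball x (a * (t - τ)),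
        ψ y t / √(a ^ 2 * (t - τ) ^ 2 - dist x y ^ 2) := by
    refine (setIntegral_eq_of_subset_of_forall_sdiff_eq_zero measurableSet_Ioi
      Set.Ioc_subset_Ioi_self ?_)
    rintro t ⟨ht, ht'⟩
    have : M < t := by
      by_contra! h
      exact ht' ⟨ht, by linarith⟩
    simp [hψ0 _ this]
  have hslice (s : ℝ) (hs : 0 < s) : ∫ y in Metric.ball x (a * (τ + s - τ)),
        ψ y (τ + s) / √(a ^ 2 * (τ + s - τ) ^ 2 - dist x y ^ 2) =
      a * ∫ φ in (0 : ℝ)..(π / 2), ∫ α in (-π)..π,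
        s * sin φ * ψ (x + (a * s * sin φ) • planeVector (cos α) (sin α)) (τ + s) := by
    have hc : Continuous fun y => ψ y (τ + s) := by
      simp only [hψf]
      fun_prop
    rw [add_sub_cancel_left, ← mul_pow, setIntegral_ball_div_sqrt hc x (mul_pos ha hs)]
    simp only [mul_assoc, intervalIntegral.integral_const_mul]
  rw [htrunc, ← intervalIntegral.integral_of_le (by linarith)]
  have hshift := intervalIntegral.integral_comp_add_left (a := 0) (b := S)
    (fun t => ∫ y in Metric.ball x (a * (t - τ)),
      ψ y t / √(a ^ 2 * (t - τ) ^ 2 - dist x y ^ 2)) τ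
  rw [add_zero] at hshift
  rw [← hshift, intervalIntegral.integral_of_le hS0,
    setIntegral_congr_fun measurableSet_Ioc fun s hs => hslice s hs.1, integral_const_mul,
    ← intervalIntegral.integral_of_le hS0]
  simp only [hcone, ← hψf] at key
  rw [key, hfdef, Function.uncurry_apply_pair]
  field_simp
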